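/- Set a = (2√3−√2)/10, b = (2√3−√2)/5, c = √(1/2), e = (4√3−2√2)/5, f = (√3+2√2)/5, g = (3√3+√2)/5, h = (8√3+√2)/10, and weights W₀ = π^{5/2}/4, W₁ = π^{5/2}/18, W₂ = π^{5/2}/36. Consider the 22 nodes in ℝ⁵: the origin with weight W₀; the point (c,c,c,c,c) with weight W₁; the 5 distinct coordinate permutations of (−h,a,a,a,a), each with weight W₁; the 10 distinct coordinate permutations of (−b,−b,−b,g,g), each with weight W₂; and the 5 distinct coordinate permutations of (e,−f,−f,−f,−f), each with weight W₂. Then Σ W_i p(x_i) = ∫_{ℝ⁵} e^{−‖x‖²} p(x) dx for every real polynomial p in 5 variables of total degree at most 4. -/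

import Mathlib

open MeasureTheory

/-!
Both sides are linear in `q`, so it suffices to treat a monomial `x^d` with `|d| ≤ 4`.

Dividing by `π^(5/2)`, the Gaussian integral of `x^d` factors into the one-dimensional moments
`1, 0, 1/2, 0, 3/4` of degrees `0, …, 4` (`integral_monomial`, `integral_pow_mul_exp`); these
follow from the recursion obtained by integrating the derivative of `x^n e^{-x²}`.

All node coordinates are integer combinations of `a` and `c`:
`b = 2a`, `e = 4a`, `f = a + c`, `g = 3a + c`, `h = 4a + c`, and the only relations needed are
`c² = 1/2` and `a² = 1/10 - (2/5) a c`. Hence each of the 126 monomial identities is a polynomial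
identity in `a, c` modulo these two relations (`rule_monomial`).
-/

/-! ### One-dimensional Gaussian moments -/

/-- The `n`-th moment of the weight `e^{-x²} / √π` for `n ≤ 4`. Larger `n` get the junk value `0`;
they never occur in degree at most `4`. -/
noncomputable def gaussMoment : ℕ → ℝ
  | 0 => 1
  | 2 => 1 / 2
  | 4 => 3 / 4
  | _ => 0

lemma integrable_pow_mul_exp (n : ℕ) :
    Integrable fun x : ℝ => x ^ n * Real.exp (-x ^ 2) := by
  have h := integrable_rpow_mul_exp_neg_mul_sq (b := 1) one_pos (s := (n : ℝ))
    (by have : (0 : ℝ) ≤ n := n.cast_nonneg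
        linarith)
  simpa [Real.rpow_natCast] using h

lemma integral_succ_pow_mul_exp (n : ℕ) :
    ∫ x : ℝ, x ^ (n + 1) * Real.exp (-x ^ 2)
      = n / 2 * ∫ x : ℝ, x ^ (n - 1) * Real.exp (-x ^ 2) := by
  have hd : ∀ x : ℝ, HasDerivAt (fun x : ℝ => x ^ n * Real.exp (-x ^ 2))
      (n * (x ^ (n - 1) * Real.exp (-x ^ 2)) - 2 * (x ^ (n + 1) * Real.exp (-x ^ 2))) x := by
    intro x
    have h := (hasDerivAt_pow n x).mul ((hasDerivAt_pow 2 x).neg.exp)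
    refine h.congr_deriv ?_
    simp only [Pi.neg_apply]
    push_cast
    ring
  have h1 := (integrable_pow_mul_exp (n - 1)).const_mul (n : ℝ)
  have h2 := (integrable_pow_mul_exp (n + 1)).const_mul 2
  have h0 := integral_eq_zero_of_hasDerivAt_of_integrable hd (h1.sub h2)
    (integrable_pow_mul_exp n)
  rw [integral_sub h1 h2, integral_const_mul, integral_const_mul] at h0
  linarith

lemma integral_pow_mul_exp {n : ℕ} (hn : n ≤ 4) :
    ∫ x : ℝ, x ^ n * Real.exp (-x ^ 2) = √Real.pi * gaussMoment n := by
  have m0 : ∫ x : ℝ, x ^ 0 * Real.exp (-x ^ 2) = √Real.pi := by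
    simpa using integral_gaussian 1
  have m1 := integral_succ_pow_mul_exp 0
  have m2 := integral_succ_pow_mul_exp 1
  have m3 := integral_succ_pow_mul_exp 2
  have m4 := integral_succ_pow_mul_exp 3
  norm_num only [Nat.cast_zero, Nat.cast_one, Nat.cast_ofNat] at m1 m2 m3 m4
  rw [m0] at m2
  rw [m1] at m3
  rw [m2] at m4
  interval_cases n <;> simp only [gaussMoment]
  · rw [m0]; ring
  · rw [m1]; ring
  · rw [m2]; ring
  · rw [m3]; ring
  · rw [m4]; ring

/-! ### Monomials in five variables -/

lemma exp_mul_monomial (d : Fin 5 →₀ ℕ) (r : ℝ) (x : Fin 5 → ℝ) :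
    Real.exp (-(∑ t, x t ^ 2)) * MvPolynomial.eval x (MvPolynomial.monomial d r)
      = r * ∏ t, (x t ^ d t * Real.exp (-x t ^ 2)) := by
  rw [MvPolynomial.eval_monomial, Finset.prod_mul_distrib, ← Real.exp_sum,
    Finsupp.prod_fintype _ _ (fun i => pow_zero _), Finset.sum_neg_distrib]
  ring

lemma integrable_monomial (d : Fin 5 →₀ ℕ) (r : ℝ) :
    Integrable fun x : Fin 5 → ℝ =>
      Real.exp (-(∑ t, x t ^ 2)) * MvPolynomial.eval x (MvPolynomial.monomial d r) := by
  simp only [exp_mul_monomial]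
  exact (Integrable.fintype_prod (fun t => integrable_pow_mul_exp (d t))).const_mul r

lemma integral_monomial (d : Fin 5 →₀ ℕ) (r : ℝ) (hd : ∀ t, d t ≤ 4) :
    ∫ x : Fin 5 → ℝ,
        Real.exp (-(∑ t, x t ^ 2)) * MvPolynomial.eval x (MvPolynomial.monomial d r)
      = Real.pi ^ ((5 : ℝ) / 2) * (r * ∏ t, gaussMoment (d t)) := by
  simp only [exp_mul_monomial]
  rw [integral_const_mul,
    integral_fintype_prod_volume_eq_prod (fun t (y : ℝ) => y ^ d t * Real.exp (-y ^ 2))]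
  simp only [integral_pow_mul_exp (hd _)]
  have hpi : Real.pi ^ ((5 : ℝ) / 2) = √Real.pi ^ 5 := by
    rw [Real.sqrt_eq_rpow, ← Real.rpow_natCast, ← Real.rpow_mul Real.pi_pos.le]
    norm_num
  rw [Finset.prod_mul_distrib, hpi]
  simp
  ring

/-! ### The node sum on monomials -/

/-- The 22-point sum, divided by `π^(5/2)`, with every coordinate written in terms of `a` and `c`,
applied to an arbitrary function `F` of the five coordinates. -/
noncomputable def nodeSum (a c : ℝ) (F : (Fin 5 → ℝ) → ℝ) : ℝ :=
  1 / 4 * F ![0, 0, 0, 0, 0]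
    + 1 / 18 * (F ![c, c, c, c, c]
      + F ![-(4 * a + c), a, a, a, a]
      + F ![a, -(4 * a + c), a, a, a]
      + F ![a, a, -(4 * a + c), a, a]
      + F ![a, a, a, -(4 * a + c), a]
      + F ![a, a, a, a, -(4 * a + c)])
    + 1 / 36 * (F ![-(2 * a), -(2 * a), -(2 * a), 3 * a + c, 3 * a + c]
      + F ![-(2 * a), -(2 * a), 3 * a + c, -(2 * a), 3 * a + c]
      + F ![-(2 * a), -(2 * a), 3 * a + c, 3 * a + c, -(2 * a)]
      + F ![-(2 * a), 3 * a + c, -(2 * a), -(2 * a), 3 * a + c]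
      + F ![-(2 * a), 3 * a + c, -(2 * a), 3 * a + c, -(2 * a)]
      + F ![-(2 * a), 3 * a + c, 3 * a + c, -(2 * a), -(2 * a)]
      + F ![3 * a + c, -(2 * a), -(2 * a), -(2 * a), 3 * a + c]
      + F ![3 * a + c, -(2 * a), -(2 * a), 3 * a + c, -(2 * a)]
      + F ![3 * a + c, -(2 * a), 3 * a + c, -(2 * a), -(2 * a)]
      + F ![3 * a + c, 3 * a + c, -(2 * a), -(2 * a), -(2 * a)]
      + F ![-(a + c), -(a + c), -(a + c), -(a + c), 4 * a]
      + F ![-(a + c), -(a + c), -(a + c), 4 * a, -(a + c)]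
      + F ![-(a + c), -(a + c), 4 * a, -(a + c), -(a + c)]
      + F ![-(a + c), 4 * a, -(a + c), -(a + c), -(a + c)]
      + F ![4 * a, -(a + c), -(a + c), -(a + c), -(a + c)])

set_option maxHeartbeats 1000000 in
/-- For each of the 126 exponent vectors, rewriting the powers `aⁱ` and `cʲ` with `i, j ≥ 2` in the
span of `1, a, c, a c` leaves an identity that is linear in `c²`. -/
lemma rule_monomial {a c : ℝ} (hc : c ^ 2 = 1 / 2) (ha : a ^ 2 = 1 / 10 - 2 / 5 * (a * c))
    (i j k l m : ℕ) (hd : i + j + k + l + m ≤ 4) :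
    nodeSum a c (fun x => x 0 ^ i * x 1 ^ j * x 2 ^ k * x 3 ^ l * x 4 ^ m)
      = gaussMoment i * gaussMoment j * gaussMoment k * gaussMoment l * gaussMoment m := by
  have c3 : c ^ 3 = c / 2 := by linear_combination c * hc
  have c4 : c ^ 4 = 1 / 4 := by linear_combination (c ^ 2 + 1 / 2) * hc
  have a2c : a ^ 2 * c = c / 10 - a / 5 := by
    linear_combination c * ha - 2 / 5 * a * hc
  have a3 : a ^ 3 = 9 / 50 * a - c / 25 := by
    linear_combination a * ha - 2 / 5 * a2c
  have a4 : a ^ 4 = 9 / 500 - 14 / 125 * (a * c) := by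
    linear_combination a * a3 + 9 / 50 * ha
  have hi : i ≤ 4 := by omega
  have hj : j ≤ 4 - i := by omega
  have hk : k ≤ 4 - i - j := by omega
  have hl : l ≤ 4 - i - j - k := by omega
  have hm : m ≤ 4 - i - j - k - l := by omega
  clear hd
  simp only [nodeSum, Matrix.cons_val]
  interval_cases i <;> interval_cases j <;> interval_cases k <;> interval_cases l <;>
    interval_cases m <;> simp only [gaussMoment] <;> ring_nf <;>
    simp only [c3, c4, hc, a3, a4, ha] <;> ring_nf <;> linarith only [hc]

/-- 22 point rule of degree 4 for `E_5^{r²}`. -/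
theorem stmt_11 (a b c e f g h W0 W1 W2 : ℝ)
    (ha : a = (2 * Real.sqrt 3 - Real.sqrt 2) / 10)
    (hb : b = (2 * Real.sqrt 3 - Real.sqrt 2) / 5)
    (hc : c = Real.sqrt (1 / 2))
    (he : e = (4 * Real.sqrt 3 - 2 * Real.sqrt 2) / 5)
    (hf : f = (Real.sqrt 3 + 2 * Real.sqrt 2) / 5)
    (hg : g = (3 * Real.sqrt 3 + Real.sqrt 2) / 5)
    (hh : h = (8 * Real.sqrt 3 + Real.sqrt 2) / 10)
    (hW0 : W0 = Real.pi ^ ((5 : ℝ) / 2) / 4)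
    (hW1 : W1 = Real.pi ^ ((5 : ℝ) / 2) / 18)
    (hW2 : W2 = Real.pi ^ ((5 : ℝ) / 2) / 36)
    :
    ∀ q : MvPolynomial (Fin 5) ℝ, q.totalDegree ≤ 4 →
      W0 * (MvPolynomial.eval ![0, 0, 0, 0, 0] q)
        + W1 * (MvPolynomial.eval ![c, c, c, c, c] q
          + MvPolynomial.eval ![-h, a, a, a, a] q
          + MvPolynomial.eval ![a, -h, a, a, a] q
          + MvPolynomial.eval ![a, a, -h, a, a] q
          + MvPolynomial.eval ![a, a, a, -h, a] q
          + MvPolynomial.eval ![a, a, a, a, -h] q)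
        + W2 * (MvPolynomial.eval ![-b, -b, -b, g, g] q
          + MvPolynomial.eval ![-b, -b, g, -b, g] q
          + MvPolynomial.eval ![-b, -b, g, g, -b] q
          + MvPolynomial.eval ![-b, g, -b, -b, g] q
          + MvPolynomial.eval ![-b, g, -b, g, -b] q
          + MvPolynomial.eval ![-b, g, g, -b, -b] q
          + MvPolynomial.eval ![g, -b, -b, -b, g] q
          + MvPolynomial.eval ![g, -b, -b, g, -b] q
          + MvPolynomial.eval ![g, -b, g, -b, -b] q
          + MvPolynomial.eval ![g, g, -b, -b, -b] q
          + MvPolynomial.eval ![-f, -f, -f, -f, e] q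
          + MvPolynomial.eval ![-f, -f, -f, e, -f] q
          + MvPolynomial.eval ![-f, -f, e, -f, -f] q
          + MvPolynomial.eval ![-f, e, -f, -f, -f] q
          + MvPolynomial.eval ![e, -f, -f, -f, -f] q)
        = ∫ x : Fin 5 → ℝ, Real.exp (-(∑ t, x t ^ 2)) * MvPolynomial.eval x q := by
  intro q hq
  have s2 : √2 ^ 2 = (2 : ℝ) := Real.sq_sqrt (by norm_num)
  have s3 : √3 ^ 2 = (3 : ℝ) := Real.sq_sqrt (by norm_num)
  have hc' : c = √2 / 2 := by
    rw [hc, Real.sqrt_eq_iff_mul_self_eq_of_pos (by positivity)]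
    linear_combination s2 / 4
  have hcc : c ^ 2 = 1 / 2 := by rw [hc']; linear_combination s2 / 4
  have haa : a ^ 2 = 1 / 10 - 2 / 5 * (a * c) := by
    rw [ha, hc']; linear_combination s3 / 25 - s2 / 100
  obtain rfl : b = 2 * a := by rw [hb, ha]; ring
  obtain rfl : e = 4 * a := by rw [he, ha]; ring
  obtain rfl : f = a + c := by rw [hf, ha, hc']; ring
  obtain rfl : g = 3 * a + c := by rw [hg, ha, hc']; ring
  obtain rfl : h = 4 * a + c := by rw [hh, ha, hc']; ring
  clear ha hb hc he hf hg hh hc' s2 s3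
  have hint : ∫ x : Fin 5 → ℝ, Real.exp (-(∑ t, x t ^ 2)) * MvPolynomial.eval x q
      = Real.pi ^ ((5 : ℝ) / 2) * nodeSum a c (fun x => MvPolynomial.eval x q) := by
    have hdeg : ∀ d ∈ q.support, d 0 + d 1 + d 2 + d 3 + d 4 ≤ 4 := by
      intro d hd
      have h := (MvPolynomial.le_totalDegree hd).trans hq
      rwa [Finsupp.sum_fintype _ _ (fun _ => rfl), Fin.sum_univ_five] at h
    have hmon : ∀ d ∈ q.support,
        ∫ x : Fin 5 → ℝ, Real.exp (-(∑ t, x t ^ 2)) *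
            MvPolynomial.eval x (MvPolynomial.monomial d (q.coeff d))
          = Real.pi ^ ((5 : ℝ) / 2) * nodeSum a c
            (fun x => MvPolynomial.eval x (MvPolynomial.monomial d (q.coeff d))) := by
      intro d hd
      have h := hdeg d hd
      rw [integral_monomial d _ (by intro t; fin_cases t <;> simp <;> omega),
        Fin.prod_univ_five, ← rule_monomial hcc haa _ _ _ _ _ h]
      simp only [MvPolynomial.eval_monomial,
        Finsupp.prod_fintype _ _ (fun i => pow_zero _), Fin.prod_univ_five, nodeSum]
      ring
    have hsum : ∀ x : Fin 5 → ℝ, MvPolynomial.eval x q = ∑ d ∈ q.support,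
        MvPolynomial.eval x (MvPolynomial.monomial d (q.coeff d)) := by
      intro x
      conv_lhs => rw [q.as_sum, map_sum]
    simp only [hsum, Finset.mul_sum]
    rw [integral_finsetSum _ (fun d _ => integrable_monomial d _), Finset.sum_congr rfl hmon]
    simp only [nodeSum, Finset.mul_sum, ← Finset.sum_add_distrib]
  rw [hint, hW0, hW1, hW2]
  simp only [nodeSum]
  ring
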